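/- Let m ≤ n be positive integers and let Ψ = Ψ_{m,n} : ℝ² → ℂ² be the Lee–Wang map. Then Ψ is Lagrangian: for all (s,t), the Kähler form vanishes on the coordinate tangent vectors, i.e. ⟨i·∂_sΨ(s,t), ∂_tΨ(s,t)⟩ = 0. -/

import Mathlib

/-- Real inner product on ℂ ≅ ℝ²: ⟨u,v⟩ = Re(u · conj v). -/
noncomputable def rinner (u v : ℂ) : ℝ := u.re * v.re + u.im * v.im

/-- Real inner product on ℂ² ≅ ℝ⁴. -/
noncomputable def rinner2 (u v : ℂ × ℂ) : ℝ := rinner u.1 v.1 + rinner u.2 v.2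

/-- Squared Euclidean norm on ℂ² ≅ ℝ⁴. -/
noncomputable def norm2 (v : ℂ × ℂ) : ℝ := ‖v.1‖ ^ 2 + ‖v.2‖ ^ 2

/-- Partial derivative of F : ℝ² → ℂ² in the first variable. -/
noncomputable def pd1 (F : ℝ → ℝ → ℂ × ℂ) (a b : ℝ) : ℂ × ℂ := deriv (fun x => F x b) a

/-- Partial derivative of F : ℝ² → ℂ² in the second variable. -/
noncomputable def pd2 (F : ℝ → ℝ → ℂ × ℂ) (a b : ℝ) : ℂ × ℂ := deriv (fun y => F a y) b

/-- The Lee–Wang map Ψ_{m,n}(s,t) = √(m+n)((1/√n)cos s e^{i√(n/m)t}, (1/√m)sin s e^{i√(m/n)t}). -/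
noncomputable def leeWang (m n : ℕ) (s t : ℝ) : ℂ × ℂ :=
  ((Real.sqrt (m + n) * (1 / Real.sqrt n) * Real.cos s : ℝ)
      * Complex.exp (Complex.I * (Real.sqrt ((n : ℝ) / m) * t)),
   (Real.sqrt (m + n) * (1 / Real.sqrt m) * Real.sin s : ℝ)
      * Complex.exp (Complex.I * (Real.sqrt ((m : ℝ) / n) * t)))

/-- Componentwise multiplication by i on ℂ² (the complex structure J). -/
noncomputable def Jmul (v : ℂ × ℂ) : ℂ × ℂ := (Complex.I * v.1, Complex.I * v.2)

/-!
The Lee–Wang map sweeps a planar curve `γ` by the one-parameter group with weights `(√(n/m), √(m/n))`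
of unitary diagonal transformations of `ℂ²`. Such a group preserves the Kähler form, and its
infinitesimal generator is Hamiltonian with moment map `(a|z₁|² + b|z₂|²) / 2`; hence the Kähler form
of the two coordinate tangent vectors is the derivative of the moment map along `γ`. The ellipse `γ`
of the Lee–Wang map is a level curve of the moment map, so this derivative vanishes.
-/

/-- The Kähler form `ω(u, v) = ⟨i u, v⟩` on `ℂ²`. -/
noncomputable def kahlerForm (u v : ℂ × ℂ) : ℝ := rinner2 (Jmul u) v

/-- The one-parameter subgroup `t ↦ (e^{iat}, e^{ibt})` of the torus. It acts on `ℂ²` by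
multiplication in the product ring `ℂ × ℂ`. -/
noncomputable def circlePhase (a b t : ℝ) : ℂ × ℂ :=
  (Complex.exp (Complex.I * (a * t)), Complex.exp (Complex.I * (b * t)))

/-- The infinitesimal generator `(ia, ib)` of `circlePhase a b`; the vector field it induces on `ℂ²`
is `z ↦ z * circleGenerator a b`. -/
noncomputable def circleGenerator (a b : ℝ) : ℂ × ℂ := (Complex.I * a, Complex.I * b)

/-- The moment map of the action of `circlePhase a b` on `ℂ²`, normalized so that
`dμ(u) = ω(u, X)` for the induced vector field `X`. -/
noncomputable def circleMoment (a b : ℝ) (z : ℂ × ℂ) : ℝ := (a * ‖z.1‖ ^ 2 + b * ‖z.2‖ ^ 2) / 2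

/-- The ellipse `s ↦ Ψ_{m,n}(s, 0)` in the real plane `ℝ² ⊂ ℂ²` that the Lee–Wang map sweeps. -/
noncomputable def leeWangProfile (m n : ℕ) (s : ℝ) : ℂ × ℂ :=
  ((Real.sqrt (m + n) * (1 / Real.sqrt n) * Real.cos s : ℝ),
   (Real.sqrt (m + n) * (1 / Real.sqrt m) * Real.sin s : ℝ))

theorem rinner_eq_inner (u v : ℂ) : rinner u v = inner ℝ u v := by
  simp only [rinner, Complex.inner, Complex.mul_re, Complex.conj_re, Complex.conj_im]
  ring

theorem rinner_mul_mul_right (u v c : ℂ) : rinner (u * c) (v * c) = ‖c‖ ^ 2 * rinner u v := by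
  simp only [rinner, Complex.mul_re, Complex.mul_im, Complex.sq_norm, Complex.normSq_apply]
  ring

theorem rinner_I_mul_mul_I_mul_ofReal (u z : ℂ) (a : ℝ) :
    rinner (Complex.I * u) (z * (Complex.I * a)) = a * rinner z u := by
  simp only [rinner, Complex.mul_re, Complex.mul_im, Complex.I_re, Complex.I_im,
    Complex.ofReal_re, Complex.ofReal_im]
  ring

theorem Jmul_mul (u v : ℂ × ℂ) : Jmul (u * v) = Jmul u * v := by
  simp only [Jmul, Prod.fst_mul, Prod.snd_mul, Prod.ext_iff, mul_assoc, and_self]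

theorem kahlerForm_mul_circlePhase (u v : ℂ × ℂ) (a b t : ℝ) :
    kahlerForm (u * circlePhase a b t) (v * circlePhase a b t) = kahlerForm u v := by
  have norm_phase (c : ℝ) : ‖Complex.exp (Complex.I * (c * t))‖ = 1 := by
    rw [← Complex.ofReal_mul, Complex.norm_exp_I_mul_ofReal]
  simp only [kahlerForm, Jmul_mul, rinner2, circlePhase, Prod.fst_mul, Prod.snd_mul,
    rinner_mul_mul_right, norm_phase, one_pow, one_mul]

theorem hasDerivAt_circlePhase (a b t : ℝ) :
    HasDerivAt (circlePhase a b) (circlePhase a b t * circleGenerator a b) t := by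
  have hasDerivAt_phase (c : ℝ) :
      HasDerivAt (fun x : ℝ => Complex.exp (Complex.I * (c * x)))
        (Complex.exp (Complex.I * (c * t)) * (Complex.I * c)) t := by
    simpa using (((hasDerivAt_id t).ofReal_comp.const_mul (c : ℂ)).const_mul Complex.I).cexp
  exact (hasDerivAt_phase a).prodMk (hasDerivAt_phase b)

theorem hasDerivAt_circleMoment {γ : ℝ → ℂ × ℂ} {γ' : ℂ × ℂ} {s : ℝ} (hγ : HasDerivAt γ γ' s)
    (a b : ℝ) :
    HasDerivAt (fun x => circleMoment a b (γ x)) (kahlerForm γ' (γ s * circleGenerator a b)) s := by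
  have fst_deriv : HasDerivAt (fun x => (γ x).1) γ'.1 s := by
    simpa using hγ.hasFDerivAt.fst.hasDerivAt
  have snd_deriv : HasDerivAt (fun x => (γ x).2) γ'.2 s := by
    simpa using hγ.hasFDerivAt.snd.hasDerivAt
  refine (((fst_deriv.norm_sq.const_mul a).add
    (snd_deriv.norm_sq.const_mul b)).div_const 2).congr_deriv ?_
  simp only [kahlerForm, rinner2, Jmul, circleGenerator, Prod.fst_mul, Prod.snd_mul,
    rinner_I_mul_mul_I_mul_ofReal, ← rinner_eq_inner]
  ring

theorem kahlerForm_pd_mul_circlePhase {γ : ℝ → ℂ × ℂ} {s : ℝ} (hγ : DifferentiableAt ℝ γ s)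
    (a b t : ℝ) :
    kahlerForm (pd1 (fun x y => γ x * circlePhase a b y) s t)
        (pd2 (fun x y => γ x * circlePhase a b y) s t) =
      deriv (fun x => circleMoment a b (γ x)) s := by
  have pd1_eq : pd1 (fun x y => γ x * circlePhase a b y) s t = deriv γ s * circlePhase a b t :=
    deriv_mul_const hγ _
  have pd2_eq : pd2 (fun x y => γ x * circlePhase a b y) s t =
      γ s * circleGenerator a b * circlePhase a b t := by
    rw [mul_right_comm, mul_assoc]
    exact ((hasDerivAt_circlePhase a b t).const_mul (γ s)).deriv
  rw [pd1_eq, pd2_eq, kahlerForm_mul_circlePhase,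
    (hasDerivAt_circleMoment hγ.hasDerivAt a b).deriv]

theorem leeWang_eq_leeWangProfile_mul_circlePhase (m n : ℕ) :
    leeWang m n = fun s t =>
      leeWangProfile m n s * circlePhase (Real.sqrt (n / m)) (Real.sqrt (m / n)) t :=
  rfl

theorem differentiable_leeWangProfile (m n : ℕ) : Differentiable ℝ (leeWangProfile m n) := by
  unfold leeWangProfile
  fun_prop

theorem circleMoment_leeWangProfile {m n : ℕ} (hm : 0 < m) (hn : 0 < n) (s : ℝ) :
    circleMoment (Real.sqrt (n / m)) (Real.sqrt (m / n)) (leeWangProfile m n s) =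
      (m + n) / (2 * (Real.sqrt m * Real.sqrt n)) := by
  have hm' : 0 < Real.sqrt m := Real.sqrt_pos.2 (Nat.cast_pos.2 hm)
  have hn' : 0 < Real.sqrt n := Real.sqrt_pos.2 (Nat.cast_pos.2 hn)
  have sq_sqrt_add : Real.sqrt (m + n) ^ 2 = m + n := Real.sq_sqrt (by positivity)
  simp only [circleMoment, leeWangProfile, Complex.norm_real, Real.norm_eq_abs, sq_abs, mul_pow,
    sq_sqrt_add, Real.sqrt_div (Nat.cast_nonneg _)]
  field_simp [hm', hn']
  exact Real.cos_sq_add_sin_sq s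

theorem lee_wang_lagrangian_general {m n : ℕ} (hm : 0 < m) (hn : 0 < n) (s t : ℝ) :
    rinner2 (Jmul (pd1 (leeWang m n) s t)) (pd2 (leeWang m n) s t) = 0 := by
  rw [← kahlerForm, leeWang_eq_leeWangProfile_mul_circlePhase,
    kahlerForm_pd_mul_circlePhase (differentiable_leeWangProfile m n s)]
  simp only [circleMoment_leeWangProfile hm hn, deriv_const]

/-- The Lee–Wang map is Lagrangian: the Kähler form ω(u,v) = ⟨iu, v⟩ vanishes on
the coordinate tangent vectors. -/
theorem lee_wang_lagrangian (m n : ℕ) (hm : 0 < m) (hmn : m ≤ n) :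
    ∀ s t : ℝ,
      rinner2 (Jmul (pd1 (leeWang m n) s t)) (pd2 (leeWang m n) s t) = 0 := by
  exact lee_wang_lagrangian_general hm (hm.trans_le hmn)
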